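/- Let n ≥ 2 and let T ∈ M_n(ℂ). Every bounded local left multiplier from 𝒜_T into any Banach 𝒜_T-bimodule is a left multiplier if and only if T is diagonalizable. -/

import Mathlib

attribute [local instance] Matrix.linftyOpNormedRing Matrix.linftyOpNormedAlgebra

/-- A Banach bimodule over a (possibly non-unital) complex Banach algebra `A`:
a Banach space `M` with bounded left and right module actions
(`l a m = a · m`, `r a m = m · a`) satisfying `(a·m)·b = a·(m·b)`. -/
structure BanachBimodule (A : Type*) (M : Type*) [NonUnitalSeminormedRing A]
    [Module ℂ A] [SeminormedAddCommGroup M] [Module ℂ M] where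
  l : A →ₗ[ℂ] M →ₗ[ℂ] M
  r : A →ₗ[ℂ] M →ₗ[ℂ] M
  l_mul : ∀ a b m, l (a * b) m = l a (l b m)
  r_mul : ∀ a b m, r (a * b) m = r b (r a m)
  l_r : ∀ a b m, l a (r b m) = r b (l a m)
  l_bdd : ∃ C : ℝ, ∀ a m, ‖l a m‖ ≤ C * ‖a‖ * ‖m‖
  r_bdd : ∃ C : ℝ, ∀ a m, ‖r a m‖ ≤ C * ‖a‖ * ‖m‖

variable {A : Type*} {M : Type*} [NonUnitalSeminormedRing A] [Module ℂ A]
  [SeminormedAddCommGroup M] [Module ℂ M]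

/-- `V : A → M` is a left multiplier (w.r.t. the bimodule structure `B`) if
`V(ab) = V(a)·b`. -/
def IsLeftMultiplier (B : BanachBimodule A M) (V : A →ₗ[ℂ] M) : Prop :=
  ∀ a b : A, V (a * b) = B.r b (V a)

/-- `V : A → M` is a local left multiplier if for every `a` there is a left
multiplier `Vₐ` with `V a = Vₐ a`. -/
def IsLocalLeftMultiplier (B : BanachBimodule A M) (V : A →ₗ[ℂ] M) : Prop :=
  ∀ a : A, ∃ Va : A →ₗ[ℂ] M, IsLeftMultiplier B Va ∧ V a = Va a

/-- `T ∈ Mₙ(ℂ)` is diagonalizable if `P⁻¹ T P` is diagonal for some invertible `P`. -/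
def Diagonalizable {n : ℕ} (T : Matrix (Fin n) (Fin n) ℂ) : Prop :=
  ∃ P : Matrix (Fin n) (Fin n) ℂ, IsUnit P ∧ (P⁻¹ * T * P).IsDiag

/-!
Both sides are equivalent to squarefreeness of the minimal polynomial of `T`.

If `minpoly ℂ T` is squarefree, multiplication by `T` on `𝒜_T` is semisimple, so `𝒜_T` is
spanned by elements `a` with `T * a = μ • a`. Such an `a` satisfies `a * b ∈ ℂ • a` for every
`b ∈ 𝒜_T`, and then linearity alone turns `V a = Vₐ a` into `V (a * b) = V a · b`.

If `(X - μ)²` divides `minpoly ℂ T`, then `T ↦ μ + ε` defines an algebra homomorphism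
`φ + δ ε : 𝒜_T → ℂ[ε]`, through which `𝒜_T` acts on `ℂ[ε]`. The map `V a = δ(a) ε` is a local
multiplier because every dual number `x + y ε` divides `y ε`, but it is not a multiplier, since
`V 1 = 0` while `V T = ε`.
-/

section Diagonalization

theorem minpoly_units_conj {k R : Type*} [CommRing k] [Ring R] [Algebra k R] (u : Rˣ) (a : R) :
    minpoly k (u * a * ↑u⁻¹) = minpoly k a :=
  minpoly.algEquiv_eq (MulSemiringAction.toAlgEquiv k R (ConjAct.toConjAct u)) a

variable {K : Type*} [Field K] {m : Type*} [Fintype m] [DecidableEq m]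

theorem squarefree_minpoly_diagonal (d : m → K) : Squarefree (minpoly K (Matrix.diagonal d)) := by
  rw [← Matrix.diagonalAlgHom_apply K, minpoly.algHom_eq _ Matrix.diagonal_injective]
  exact (minpoly.isRadical K d).squarefree (minpoly.ne_zero (.of_finite K d))

theorem exists_basis_apply_eq_smul {V : Type*} [AddCommGroup V] [Module K V]
    {f : Module.End K V} (hf : ⨆ μ, f.eigenspace μ = ⊤) {ι : Type*} (b₀ : Module.Basis ι K V) :
    ∃ (b : Module.Basis ι K V) (d : ι → K), ∀ i, f (b i) = d i • b i := by
  classical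
  have hint := DirectSum.isInternal_submodule_of_iSupIndep_of_iSup_eq_top
    f.eigenspaces_iSupIndep hf
  let b := hint.collectedBasis fun μ ↦ Module.Basis.ofVectorSpace K (f.eigenspace μ)
  let e := b.indexEquiv b₀
  refine ⟨b.reindex e, fun i ↦ (e.symm i).1, fun i ↦ ?_⟩
  rw [b.reindex_apply]
  exact Module.End.mem_eigenspace_iff.mp (hint.collectedBasis_mem _ _)

theorem toMatrix_eq_diagonal {k V : Type*} [CommSemiring k] [AddCommMonoid V] [Module k V]
    {f : Module.End k V} {b : Module.Basis m k V} {d : m → k} (h : ∀ i, f (b i) = d i • b i) :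
    LinearMap.toMatrix b b f = Matrix.diagonal d := by
  ext i j
  rcases eq_or_ne i j with rfl | hij
  · simp [LinearMap.toMatrix_apply, h]
  · simp [LinearMap.toMatrix_apply, h, hij]

theorem exists_isDiag_conj_iff_squarefree_minpoly [IsAlgClosed K] (T : Matrix m m K) :
    (∃ P : Matrix m m K, IsUnit P ∧ (P⁻¹ * T * P).IsDiag) ↔ Squarefree (minpoly K T) := by
  constructor
  · rintro ⟨_, ⟨u, rfl⟩, hD⟩
    rw [← minpoly_units_conj u⁻¹, inv_inv, Matrix.coe_units_inv, ← hD.diagonal_diag]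
    exact squarefree_minpoly_diagonal _
  · intro hT
    have hss : Module.End.IsSemisimple (Matrix.toLin' T) := by
      apply Module.End.isSemisimple_of_squarefree_aeval_eq_zero hT
      rw [← Matrix.minpoly_toLin', minpoly.aeval]
    let e := Pi.basisFun K m
    obtain ⟨b, d, hb⟩ := exists_basis_apply_eq_smul hss.iSup_eigenspace_eq_top e
    have hP : (e.toMatrix b)⁻¹ = b.toMatrix e :=
      Matrix.inv_eq_left_inv (b.toMatrix_mul_toMatrix_flip e)
    refine ⟨e.toMatrix b, @isUnit_of_invertible _ _ _ (e.invertibleToMatrix b), ?_⟩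
    have hconj : (e.toMatrix b)⁻¹ * T * e.toMatrix b = Matrix.diagonal d := by
      rw [hP, ← toMatrix_eq_diagonal hb,
        ← basis_toMatrix_mul_linearMap_toMatrix_mul_basis_toMatrix b e b e,
        LinearMap.toMatrix_eq_toMatrix', LinearMap.toMatrix'_toLin']
    exact hconj ▸ Matrix.isDiag_diagonal d

end Diagonalization

section SinglyGenerated

open Polynomial DualNumber

theorem surjective_aeval_adjoin_singleton {k R : Type*} [CommSemiring k] [Semiring R]
    [Algebra k R] (x : R) :
    Function.Surjective (aeval (R := k)
      (⟨x, Algebra.self_mem_adjoin_singleton k x⟩ : Algebra.adjoin k {x})) :=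
  fun a ↦ by
    obtain ⟨p, hp⟩ := Algebra.adjoin_eq_exists_aeval k x a
    exact ⟨p, Subtype.ext ((aeval_subalgebra_coe p _ _).trans hp)⟩

theorem exists_mul_eq_smul_of_surjective_aeval {k S : Type*} [CommRing k] [Ring S] [Algebra k S]
    {t : S} (ht : Function.Surjective (aeval (R := k) t)) {a : S} {μ : k} (ha : t * a = μ • a)
    (b : S) : ∃ c : k, a * b = c • a := by
  obtain ⟨p, rfl⟩ := ht b
  have hcomm : Commute a (aeval t p) := by
    obtain ⟨q, rfl⟩ := ht a
    exact (Commute.all q p).map (aeval t)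
  have hp : aeval (Algebra.lmul k S t) p a = p.eval μ • a :=
    Module.End.aeval_apply_of_mem_apply_eq_smul ha
  refine ⟨p.eval μ, ?_⟩
  rwa [aeval_algHom_apply, Algebra.coe_lmul_eq_mul, LinearMap.mul_apply', ← hcomm.eq] at hp

variable {K S : Type*} [Field K] [Ring S] [Algebra K S] {t : S}

theorem iSup_eigenspace_lmul_eq_top [IsAlgClosed K] [FiniteDimensional K S]
    (ht : Squarefree (minpoly K t)) : ⨆ μ : K, (Algebra.lmul K S t).eigenspace μ = ⊤ := by
  have hss : (Algebra.lmul K S t).IsSemisimple := by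
    apply Module.End.isSemisimple_of_squarefree_aeval_eq_zero ht
    rw [aeval_algHom_apply, minpoly.aeval, map_zero]
  exact hss.iSup_eigenspace_eq_top

theorem exists_algHom_apply_eq_of_surjective_aeval (ht : Function.Surjective (aeval (R := K) t))
    {D : Type*} [Ring D] [Algebra K D] {y : D} (hy : aeval y (minpoly K t) = 0) :
    ∃ φ : S →ₐ[K] D, φ t = y := by
  have hker : ∀ p ∈ RingHom.ker (aeval (R := K) t), aeval y p = 0 := by
    intro p hp
    obtain ⟨q, rfl⟩ := minpoly.dvd K t hp
    rw [map_mul, hy, zero_mul]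
  let e := Ideal.quotientKerAlgEquivOfSurjective ht
  have he : e.symm t = Ideal.Quotient.mk _ X := by
    rw [AlgEquiv.symm_apply_eq, Ideal.quotientKerAlgEquivOfSurjective_mk, aeval_X]
  refine ⟨(Ideal.Quotient.liftₐ _ (aeval y) hker).comp e.symm, ?_⟩
  calc Ideal.Quotient.liftₐ _ (aeval y) hker (e.symm t)
    _ = aeval y X := by rw [he]; rfl
    _ = y := aeval_X y

theorem exists_sq_X_sub_C_dvd_of_not_squarefree [IsAlgClosed K] {p : K[X]} (hp : ¬Squarefree p) :
    ∃ μ : K, (X - C μ) ^ 2 ∣ p := by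
  simp only [Squarefree, not_forall] at hp
  obtain ⟨q, hqp, hq⟩ := hp
  obtain ⟨μ, hμ⟩ := IsAlgClosed.exists_root q (mt isUnit_iff_degree_eq_zero.mpr hq)
  exact ⟨μ, sq (X - C μ) ▸ (mul_dvd_mul (dvd_iff_isRoot.mpr hμ) (dvd_iff_isRoot.mpr hμ)).trans hqp⟩

theorem exists_algHom_dualNumber_of_not_squarefree_minpoly [IsAlgClosed K]
    (ht : Function.Surjective (aeval (R := K) t)) (hsq : ¬Squarefree (minpoly K t)) :
    ∃ φ : S →ₐ[K] K[ε], (φ t).snd = 1 := by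
  obtain ⟨μ, q, hq⟩ := exists_sq_X_sub_C_dvd_of_not_squarefree hsq
  have hroot : aeval (algebraMap K K[ε] μ + ε) (minpoly K t) = 0 := by
    simp [hq]
  obtain ⟨φ, hφ⟩ := exists_algHom_apply_eq_of_surjective_aeval ht hroot
  exact ⟨φ, by simp [hφ, TrivSqZeroExt.algebraMap_eq_inl]⟩

end SinglyGenerated

section Multipliers

theorem IsLocalLeftMultiplier.map_mul_of_mul_eq_smul {B : BanachBimodule A M} {V : A →ₗ[ℂ] M}
    (hV : IsLocalLeftMultiplier B V) {a b : A} {c : ℂ} (hab : a * b = c • a) :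
    V (a * b) = B.r b (V a) := by
  obtain ⟨Va, hVa, hVVa⟩ := hV a
  calc V (a * b) = c • V a := by rw [hab, map_smul]
    _ = Va (a * b) := by rw [hVVa, hab, map_smul]
    _ = B.r b (V a) := by rw [hVa, hVVa]

theorem IsLocalLeftMultiplier.isLeftMultiplier_of_iSup_eq_top [IsScalarTower ℂ A A]
    {B : BanachBimodule A M} {V : A →ₗ[ℂ] M} (hV : IsLocalLeftMultiplier B V) {ι : Sort*}
    {E : ι → Submodule ℂ A} (hE : ⨆ i, E i = ⊤)
    (hmul : ∀ i, ∀ a ∈ E i, ∀ b, ∃ c : ℂ, a * b = c • a) : IsLeftMultiplier B V := by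
  intro a b
  have hle : ⨆ i, E i ≤ LinearMap.eqLocus (V ∘ₗ LinearMap.mulRight ℂ b) (B.r b ∘ₗ V) := by
    refine iSup_le fun i a ha ↦ ?_
    obtain ⟨c, hc⟩ := hmul i a ha b
    exact hV.map_mul_of_mul_eq_smul hc
  exact hle (hE ▸ Submodule.mem_top)

theorem BanachBimodule.isLeftMultiplier_r_flip (B : BanachBimodule A M) (m : M) :
    IsLeftMultiplier B (B.r.flip m) :=
  fun a b ↦ B.r_mul a b m

end Multipliers

section DualNumberModule

open DualNumber TrivSqZeroExt

variable {R D : Type*} [SeminormedRing R] [NormedAlgebra ℂ R]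

/-- The commutative Banach algebra `D` as a symmetric `R`-bimodule, acted on through `ρ`. -/
noncomputable def BanachBimodule.ofAlgHom [SeminormedCommRing D] [NormedAlgebra ℂ D]
    (ρ : R →A[ℂ] D) : BanachBimodule R D where
  l := LinearMap.mul ℂ D ∘ₗ ρ.toLinearMap
  r := LinearMap.mul ℂ D ∘ₗ ρ.toLinearMap
  l_mul a b m := by simp [mul_assoc]
  r_mul a b m := by simp [mul_left_comm, mul_assoc]
  l_r a b m := by simp [mul_left_comm]
  l_bdd := ⟨‖ρ.toContinuousLinearMap‖, fun a m ↦ (norm_mul_le _ _).trans <| by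
    gcongr; exact ρ.toContinuousLinearMap.le_opNorm a⟩
  r_bdd := ⟨‖ρ.toContinuousLinearMap‖, fun a m ↦ (norm_mul_le _ _).trans <| by
    gcongr; exact ρ.toContinuousLinearMap.le_opNorm a⟩

theorem isLocalLeftMultiplier_ofAlgHom_of_dvd [SeminormedCommRing D] [NormedAlgebra ℂ D]
    {ρ : R →A[ℂ] D} {V : R →ₗ[ℂ] D} (h : ∀ a, ρ a ∣ V a) :
    IsLocalLeftMultiplier (.ofAlgHom ρ) V := by
  intro a
  obtain ⟨m, hm⟩ := h a
  exact ⟨_, BanachBimodule.isLeftMultiplier_r_flip _ m, hm⟩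

theorem dvd_inr_snd {K : Type*} [Field K] (z : K[ε]) : z ∣ inr z.snd := by
  by_cases hz : z.fst = 0
  · exact dvd_of_eq (TrivSqZeroExt.ext hz rfl)
  · exact (isUnit_iff_isUnit_fst.mpr (Ne.isUnit hz)).dvd

/-- For an algebra homomorphism `ρ = φ + δ ε` into the dual numbers, the map `a ↦ δ(a) ε`. -/
noncomputable def infinitesimalPart (ρ : R →A[ℂ] ℂ[ε]) : R →ₗ[ℂ] ℂ[ε] :=
  inrHom ℂ ℂ ∘ₗ sndHom ℂ ℂ ∘ₗ ρ.toLinearMap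

theorem isLocalLeftMultiplier_infinitesimalPart (ρ : R →A[ℂ] ℂ[ε]) :
    IsLocalLeftMultiplier (.ofAlgHom ρ) (infinitesimalPart ρ) :=
  isLocalLeftMultiplier_ofAlgHom_of_dvd fun a ↦ dvd_inr_snd (ρ a)

theorem continuous_infinitesimalPart (ρ : R →A[ℂ] ℂ[ε]) : Continuous (infinitesimalPart ρ) :=
  continuous_inr.comp (TrivSqZeroExt.continuous_snd.comp ρ.cont)

theorem snd_apply_eq_zero_of_isLeftMultiplier {ρ : R →A[ℂ] ℂ[ε]}
    (h : IsLeftMultiplier (.ofAlgHom ρ) (infinitesimalPart ρ)) (a : R) : (ρ a).snd = 0 := by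
  simpa [infinitesimalPart] using congr_arg TrivSqZeroExt.snd (h 1 a)

end DualNumberModule

section SinglyGeneratedMultipliers

open Polynomial DualNumber

variable {A : Type*}

theorem squarefree_minpoly_of_isLeftMultiplier [NormedRing A] [NormedAlgebra ℂ A]
    [FiniteDimensional ℂ A] {t : A} (ht : Function.Surjective (aeval (R := ℂ) t))
    (H : ∀ (B : BanachBimodule A ℂ[ε]) (V : A →ₗ[ℂ] ℂ[ε]),
      Continuous V → IsLocalLeftMultiplier B V → IsLeftMultiplier B V) :
    Squarefree (minpoly ℂ t) := by
  by_contra hsq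
  obtain ⟨φ, hφ⟩ := exists_algHom_dualNumber_of_not_squarefree_minpoly ht hsq
  let ρ : A →A[ℂ] ℂ[ε] := ⟨φ, φ.toLinearMap.continuous_of_finiteDimensional⟩
  have hmul := H _ _ (continuous_infinitesimalPart ρ) (isLocalLeftMultiplier_infinitesimalPart ρ)
  exact one_ne_zero (hφ.symm.trans (snd_apply_eq_zero_of_isLeftMultiplier hmul t))

theorem isLeftMultiplier_of_squarefree_minpoly [SeminormedRing A] [NormedAlgebra ℂ A]
    [FiniteDimensional ℂ A] {t : A} (ht : Function.Surjective (aeval (R := ℂ) t))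
    (hsq : Squarefree (minpoly ℂ t)) {M : Type*} [SeminormedAddCommGroup M] [Module ℂ M]
    {B : BanachBimodule A M} {V : A →ₗ[ℂ] M} (hV : IsLocalLeftMultiplier B V) :
    IsLeftMultiplier B V :=
  hV.isLeftMultiplier_of_iSup_eq_top (iSup_eigenspace_lmul_eq_top hsq) fun _ _ ha ↦
    exists_mul_eq_smul_of_surjective_aeval ht (Module.End.mem_eigenspace_iff.mp ha)

theorem forall_isLeftMultiplier_iff_squarefree_minpoly [NormedRing A] [NormedAlgebra ℂ A]
    [FiniteDimensional ℂ A] {t : A} (ht : Function.Surjective (aeval (R := ℂ) t)) :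
    (∀ (M : Type) (_ : NormedAddCommGroup M) (_ : NormedSpace ℂ M) (_ : CompleteSpace M)
        (B : BanachBimodule A M) (V : A →ₗ[ℂ] M),
        Continuous V → IsLocalLeftMultiplier B V → IsLeftMultiplier B V) ↔
      Squarefree (minpoly ℂ t) :=
  ⟨fun H ↦ squarefree_minpoly_of_isLeftMultiplier ht (H ℂ[ε] _ _ inferInstance),
    fun hsq _ _ _ _ _ _ _ hV ↦ isLeftMultiplier_of_squarefree_minpoly ht hsq hV⟩

end SinglyGeneratedMultipliers

/-- For `n ≥ 2` and `T ∈ Mₙ(ℂ)`: every bounded local left multiplier from `𝒜_T` into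
any Banach `𝒜_T`-bimodule is a left multiplier, if and only if `T` is diagonalizable. -/
theorem local_left_multipliers_are_multipliers_iff_diagonalizable (n : ℕ) (hn : 2 ≤ n)
    (T : Matrix (Fin n) (Fin n) ℂ) :
    (∀ (M : Type) (_ : NormedAddCommGroup M) (_ : NormedSpace ℂ M) (_ : CompleteSpace M)
        (B : BanachBimodule ↥(Algebra.adjoin ℂ ({T} : Set (Matrix (Fin n) (Fin n) ℂ))) M)
        (V : ↥(Algebra.adjoin ℂ ({T} : Set (Matrix (Fin n) (Fin n) ℂ))) →ₗ[ℂ] M),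
        Continuous V → IsLocalLeftMultiplier B V → IsLeftMultiplier B V) ↔
      Diagonalizable T := by
  let t : Algebra.adjoin ℂ {T} := ⟨T, Algebra.self_mem_adjoin_singleton ℂ T⟩
  have : FiniteDimensional ℂ (Algebra.adjoin ℂ {T}) :=
    Algebra.finite_adjoin_simple_of_isIntegral T.isIntegral
  have ht : minpoly ℂ T = minpoly ℂ t :=
    minpoly.algHom_eq (Algebra.adjoin ℂ {T}).val Subtype.val_injective t
  rw [Diagonalizable, exists_isDiag_conj_iff_squarefree_minpoly, ht]
  exact forall_isLeftMultiplier_iff_squarefree_minpoly (surjective_aeval_adjoin_singleton T)
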